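/- Let P₁ and P₂ be properties (sets of complete theories of Σ). There exists a Σ-sentence φ such that φ totally satisfies P₁ and ¬φ totally satisfies P₂ if and only if the E-closures of P₁ and P₂ are disjoint: Cl_E(P₁) ∩ Cl_E(P₂) = ∅. -/

import Mathlib

open FirstOrder Language

/-- A sentence φ *partially satisfies* a property `P`: `φ ⊳_pt P` iff `φ ∈ T` for some `T ∈ P`. -/
def PartSat {L : FirstOrder.Language} (φ : L.Sentence) (P : Set L.Theory) : Prop :=
  ∃ T ∈ P, φ ∈ T

/-- A sentence φ *totally satisfies* a property `P`: `φ ⊳_tt P` iff `φ ∈ T` for every `T ∈ P`. -/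
def TotSat {L : FirstOrder.Language} (φ : L.Sentence) (P : Set L.Theory) : Prop :=
  ∀ T ∈ P, φ ∈ T

/-- The E-closure of a property `P`: the set of complete theories `T` such that every sentence
of `T` belongs to some theory of `P`. -/
def ClE {L : FirstOrder.Language} (P : Set L.Theory) : Set L.Theory :=
  {T | T.IsMaximal ∧ ∀ φ ∈ T, ∃ T' ∈ P, φ ∈ T'}

/-- There is a sentence φ with φ ⊳_tt P₁ and ¬φ ⊳_tt P₂ iff the E-closures of P₁ and P₂ are
disjoint. -/
theorem totSat_separation {L : FirstOrder.Language} (P₁ P₂ : Set L.Theory)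
    (h₁ : ∀ T ∈ P₁, T.IsMaximal) (h₂ : ∀ T ∈ P₂, T.IsMaximal) :
    (∃ φ : L.Sentence, TotSat φ P₁ ∧ TotSat φ.not P₂) ↔ ClE P₁ ∩ ClE P₂ = ∅ := by
  classical
  have key : ∀ (T : L.Theory), T.IsMaximal → ∀ φ : L.Sentence, φ ∈ T → φ.not ∈ T → False := by
    intro T hT φ h h'
    obtain ⟨M⟩ := hT.1
    have a : M ⊨ φ := Theory.realize_sentence_of_mem T h
    have b : M ⊨ φ.not := Theory.realize_sentence_of_mem T h'
    rw [Sentence.realize_not] at b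
    exact b a
  constructor
  · rintro ⟨φ, a, b⟩
    rw [Set.eq_empty_iff_forall_notMem]
    rintro T ⟨⟨hT, c⟩, ⟨_, d⟩⟩
    rcases hT.mem_or_not_mem φ with h | h
    · obtain ⟨T', hT', e⟩ := d _ h
      exact key T' (h₂ _ hT') φ e (b _ hT')
    · obtain ⟨T', hT', e⟩ := c _ h
      exact key T' (h₁ _ hT') φ (a _ hT') e
  · intro hE
    have cl : ∀ (P : Set L.Theory), (∀ T ∈ P, T.IsMaximal) → ∀ S : L.Theory, S.IsMaximal →
        (∀ φ, TotSat φ P → φ ∈ S) → S ∈ ClE P := by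
      intro P hP S hS h
      refine ⟨hS, fun φ hφ => ?_⟩
      by_contra hc
      refine key S hS φ hφ (h _ fun T hT => ?_)
      exact ((hP T hT).mem_or_not_mem φ).resolve_left fun hh => hc ⟨T, hT, hh⟩
    have hns : ¬ Theory.IsSatisfiable ({φ | TotSat φ P₁} ∪ {φ | TotSat φ P₂} : L.Theory) := by
      rintro ⟨M⟩
      have hm : ∀ φ, φ ∈ ({φ | TotSat φ P₁} ∪ {φ | TotSat φ P₂} : L.Theory) →
          φ ∈ L.completeTheory M := fun φ h =>
        Theory.realize_sentence_of_mem _ h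
      have : L.completeTheory M ∈ ClE P₁ ∩ ClE P₂ :=
        ⟨cl _ h₁ _ (completeTheory.isMaximal L M) fun φ h => hm φ (Or.inl h),
         cl _ h₂ _ (completeTheory.isMaximal L M) fun φ h => hm φ (Or.inr h)⟩
      rw [hE] at this
      exact this
    rw [Theory.isSatisfiable_iff_isFinitelySatisfiable, Theory.IsFinitelySatisfiable] at hns
    push Not at hns
    obtain ⟨T0, hT0, hu⟩ := hns
    let F := T0.filter (fun φ => TotSat φ P₁)
    let ψ : L.Sentence := BoundedFormula.iInf (fun x : F => (x : L.Sentence))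
    have hψ : ∀ (M : Type _) [L.Structure M], M ⊨ ψ ↔ ∀ φ ∈ F, M ⊨ φ := by
      intro M _
      simp [ψ, Sentence.Realize, Formula.Realize, BoundedFormula.realize_iInf]
    refine ⟨ψ, fun T hT => ?_, fun T hT => ?_⟩
    · refine (h₁ T hT).mem_of_models ?_
      rw [Theory.models_sentence_iff]
      intro M
      rw [hψ]
      intro φ hφ
      exact Theory.realize_sentence_of_mem T ((Finset.mem_filter.1 hφ).2 T hT)
    · refine ((h₂ T hT).mem_or_not_mem ψ).resolve_left fun hh => hu ?_
      obtain ⟨M⟩ := (h₂ T hT).1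
      have a : M ⊨ ψ := Theory.realize_sentence_of_mem T hh
      rw [hψ] at a
      have : M ⊨ (T0 : L.Theory) := by
        refine ⟨fun φ hφ => ?_⟩
        rcases hT0 hφ with h | h
        · exact a φ (Finset.mem_filter.2 ⟨hφ, h⟩)
        · exact Theory.realize_sentence_of_mem T (h T hT)
      exact Theory.Model.isSatisfiable M
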